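/- Let s ≥ 2 be an integer and c > 0. For an integer n ≥ 2 let Ω_n be the collection of all (s+1)-element sets ω = {x_1, …, x_{s+1}} of positive integers with x_{s+1} < (c·log n)^s < x_s < x_{s-1} < ⋯ < x_1 and x_1 + ⋯ + x_{s+1} = n, and for such ω set p(ω) = s^{-(s+1)} · ∏_{x∈ω} x^{-1+1/s}. Then, as n → ∞, ∏_{ω∈Ω_n} (1 − p(ω)) = exp(−(1+o(1))·c·λ_s·log n); equivalently, −log ∏_{ω∈Ω_n}(1 − p(ω)) is asymptotic to c·λ_s·log n. -/

import Mathlib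

open Finset Filter

/-- `λ_s = Γ(1/s)^s / (s^s · s!)`. -/
noncomputable def lambdaS (s : ℕ) : ℝ :=
  (Real.Gamma (1 / s)) ^ s / ((s : ℝ) ^ s * (Nat.factorial s))

/-- The family `Ω_n` of `(s+1)`-element sets `ω = {x_1 > ⋯ > x_{s+1}}` of positive integers
with `x_1 + ⋯ + x_{s+1} = n` and `x_{s+1} < (c log n)^s < x_s` (i.e. exactly one element of
`ω` lies below `(c log n)^s` and no element equals it). -/
noncomputable def OmegaN (s : ℕ) (c : ℝ) (n : ℕ) : Finset (Finset ℕ) :=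
  (Finset.powersetCard (s + 1) (Finset.Icc 1 n)).filter
    (fun ω : Finset ℕ => ω.sum id = n ∧
      (ω.filter fun x : ℕ => (x : ℝ) < (c * Real.log n) ^ s).card = 1 ∧
      ∀ x ∈ ω, (x : ℝ) ≠ (c * Real.log n) ^ s)

open Asymptotics
open scoped Nat PowerSeries Topology

/-!
Write `α = 1/s`. The coefficients `b(x) = multichoose α x` of `(1 - X)^(-α)` satisfy
`b(x) ~ x^(α-1) / Γ(α)`, and the `s`-th power of that series is `(1 - X)^(-1)`, so the products
`b(x_1) ⋯ b(x_s)` over ordered `s`-tuples with a prescribed sum `m` add up to exactly `1`.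
Passing to `s`-element subsets of `(t, n]` divides this by `s!` up to the tuples with an entry at
most `t` or with a repeated entry, which contribute `o(1)` as soon as `t → ∞` and `t = o(m^α)`; the
estimates are inequalities for elementary symmetric functions of monomials in the ordered ring of
power series. Hence, for `t = (c log n)^s`, the sum of `∏ x^(α-1)` over the `s`-element subsets of
`(t, n]` with sum `n - y` tends to `Γ(α)^s / s!` uniformly in the smallest element `y < t`. Since
`∑_{y < t} y^(α-1) ~ s t^α = s c log n`, this gives `∑ p(ω) ~ c λ_s log n`, and `max p(ω) → 0`
allows replacing `-log (1 - p(ω))` by `p(ω)`.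
-/

section ElementarySymmetric

variable {R : Type*} [CommSemiring R]

lemma esymm_zero_right (s : Multiset R) : s.esymm 0 = 1 := by
  simp [Multiset.esymm]

lemma esymm_zero_succ (k : ℕ) : (0 : Multiset R).esymm (k + 1) = 0 := by
  simp [Multiset.esymm, Multiset.powersetCard_zero_right]

lemma esymm_cons_succ (a : R) (s : Multiset R) (k : ℕ) :
    (a ::ₘ s).esymm (k + 1) = s.esymm (k + 1) + a * s.esymm k := by
  simp only [Multiset.esymm, Multiset.powersetCard_cons, Multiset.map_add, Multiset.map_map,
    Function.comp_def, Multiset.prod_cons, Multiset.sum_add, Multiset.sum_map_mul_left]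

lemma esymm_one_right (s : Multiset R) : s.esymm 1 = s.sum := by
  induction s using Multiset.induction_on with
  | empty => exact esymm_zero_succ 0
  | cons a s ih => rw [esymm_cons_succ, ih, esymm_zero_right, mul_one, Multiset.sum_cons, add_comm]

variable [PartialOrder R] [IsOrderedRing R] {s : Multiset R}

lemma esymm_nonneg (hs : ∀ x ∈ s, 0 ≤ x) (k : ℕ) : 0 ≤ s.esymm k := by
  refine Multiset.sum_nonneg fun y hy => ?_
  obtain ⟨t, ht, rfl⟩ := Multiset.mem_map.1 hy
  exact Multiset.prod_nonneg fun x hx =>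
    hs x (Multiset.mem_of_le (Multiset.mem_powersetCard.1 ht).1 hx)

lemma succ_mul_esymm_succ_le (hs : ∀ x ∈ s, 0 ≤ x) (k : ℕ) :
    (k + 1) * s.esymm (k + 1) ≤ s.sum * s.esymm k := by
  induction s using Multiset.induction_on generalizing k with
  | empty => simp [esymm_zero_succ]
  | cons a s ih =>
    obtain ⟨ha, hs⟩ := Multiset.forall_mem_cons.1 hs
    rw [Multiset.sum_cons]
    cases k with
    | zero => simp [esymm_zero_right, esymm_one_right]
    | succ k =>
      have hsq : 0 ≤ a ^ 2 * s.esymm k := mul_nonneg (pow_nonneg ha 2) (esymm_nonneg hs k)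
      have ih_k := ih hs k
      have ih_succ := ih hs (k + 1)
      rw [esymm_cons_succ, esymm_cons_succ]
      push_cast
      calc (k + 1 + 1) * (s.esymm (k + 2) + a * s.esymm (k + 1))
          = (↑(k + 1) + 1) * s.esymm (k + 2) + a * ((k + 1) * s.esymm (k + 1))
              + a * s.esymm (k + 1) + 0 := by push_cast; ring
        _ ≤ s.sum * s.esymm (k + 1) + a * (s.sum * s.esymm k)
              + a * s.esymm (k + 1) + a ^ 2 * s.esymm k := by gcongr
        _ = (a + s.sum) * (s.esymm (k + 1) + a * s.esymm k) := by ring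

lemma sum_mul_esymm_succ_le (hs : ∀ x ∈ s, 0 ≤ x) (k : ℕ) :
    s.sum * s.esymm (k + 1) ≤ (k + 2) * s.esymm (k + 2) + (s.map (· ^ 2)).sum * s.esymm k := by
  induction s using Multiset.induction_on generalizing k with
  | empty => simp [esymm_zero_succ]
  | cons a s ih =>
    obtain ⟨ha, hs⟩ := Multiset.forall_mem_cons.1 hs
    have hsucc := ih hs
    rw [Multiset.sum_cons, Multiset.map_cons, Multiset.sum_cons]
    cases k with
    | zero =>
      rw [esymm_cons_succ, esymm_cons_succ, esymm_zero_right, esymm_zero_right]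
      calc (a + s.sum) * (s.esymm 1 + a * 1)
          = s.sum * s.esymm 1 + (a ^ 2 + a * s.esymm 1 + a * s.sum) := by ring
        _ ≤ ((0 : ℕ) + 2) * s.esymm 2 + (s.map (· ^ 2)).sum * s.esymm 0
              + (a ^ 2 + a * s.esymm 1 + a * s.sum) := by gcongr; exact hsucc 0
        _ = _ := by rw [esymm_one_right, esymm_zero_right]; push_cast; ring
    | succ k =>
      rw [esymm_cons_succ, esymm_cons_succ, esymm_cons_succ]
      push_cast
      calc (a + s.sum) * (s.esymm (k + 2) + a * s.esymm (k + 1))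
          = s.sum * s.esymm (k + 2) + a * (s.sum * s.esymm (k + 1))
              + (a * s.esymm (k + 2) + a ^ 2 * s.esymm (k + 1)) + 0 := by ring
        _ ≤ ((↑(k + 1) + 2) * s.esymm (k + 3) + (s.map (· ^ 2)).sum * s.esymm (k + 1))
              + a * ((k + 2) * s.esymm (k + 2) + (s.map (· ^ 2)).sum * s.esymm k)
              + (a * s.esymm (k + 2) + a ^ 2 * s.esymm (k + 1)) + a ^ 3 * s.esymm k := by
            gcongr
            · exact hsucc (k + 1)
            · exact hsucc k
            · exact mul_nonneg (pow_nonneg ha 3) (esymm_nonneg hs k)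
        _ = _ := by push_cast; ring

lemma factorial_mul_esymm_le_sum_pow (hs : ∀ x ∈ s, 0 ≤ x) (k : ℕ) :
    k ! * s.esymm k ≤ s.sum ^ k := by
  induction k with
  | zero => simp [esymm_zero_right]
  | succ k ih =>
    calc ((k + 1)! : R) * s.esymm (k + 1)
        = k ! * ((k + 1) * s.esymm (k + 1)) := by rw [Nat.factorial_succ]; push_cast; ring
      _ ≤ k ! * (s.sum * s.esymm k) :=
          mul_le_mul_of_nonneg_left (succ_mul_esymm_succ_le hs k) (Nat.cast_nonneg _)
      _ = s.sum * (k ! * s.esymm k) := by ring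
      _ ≤ s.sum * s.sum ^ k := by gcongr; exact Multiset.sum_nonneg hs
      _ = s.sum ^ (k + 1) := (pow_succ' _ _).symm

lemma sum_pow_le_factorial_mul_esymm_add (hs : ∀ x ∈ s, 0 ≤ x) (k : ℕ) :
    s.sum ^ (k + 2) ≤
      (k + 2)! * s.esymm (k + 2) + (k + 2).choose 2 * ((s.map (· ^ 2)).sum * s.sum ^ k) := by
  have hsum : 0 ≤ s.sum := Multiset.sum_nonneg hs
  have hsq : 0 ≤ (s.map (· ^ 2)).sum := Multiset.sum_nonneg fun y hy => by
    obtain ⟨x, hx, rfl⟩ := Multiset.mem_map.1 hy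
    exact pow_nonneg (hs x hx) 2
  induction k with
  | zero =>
    have := sum_mul_esymm_succ_le hs 0
    simpa [esymm_one_right, esymm_zero_right, pow_two] using this
  | succ k ih =>
    calc s.sum ^ (k + 3)
        = s.sum * s.sum ^ (k + 2) := pow_succ' _ _
      _ ≤ s.sum * ((k + 2)! * s.esymm (k + 2)
            + (k + 2).choose 2 * ((s.map (· ^ 2)).sum * s.sum ^ k)) := by gcongr
      _ = (k + 2)! * (s.sum * s.esymm (k + 2))
            + (k + 2).choose 2 * ((s.map (· ^ 2)).sum * s.sum ^ (k + 1)) := by ring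
      _ ≤ (k + 2)! * ((↑(k + 1) + 2) * s.esymm (k + 3) + (s.map (· ^ 2)).sum * s.esymm (k + 1))
            + (k + 2).choose 2 * ((s.map (· ^ 2)).sum * s.sum ^ (k + 1)) := by
          gcongr
          exact sum_mul_esymm_succ_le hs (k + 1)
      _ = (k + 3)! * s.esymm (k + 3)
            + (k + 2) * ((s.map (· ^ 2)).sum * ((k + 1)! * s.esymm (k + 1)))
            + (k + 2).choose 2 * ((s.map (· ^ 2)).sum * s.sum ^ (k + 1)) := by
          rw [Nat.factorial_succ (k + 2), Nat.factorial_succ (k + 1)]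
          push_cast
          ring
      _ ≤ (k + 3)! * s.esymm (k + 3)
            + (k + 2) * ((s.map (· ^ 2)).sum * s.sum ^ (k + 1))
            + (k + 2).choose 2 * ((s.map (· ^ 2)).sum * s.sum ^ (k + 1)) := by
          gcongr
          · exact add_nonneg (Nat.cast_nonneg k) zero_le_two
          · exact factorial_mul_esymm_le_sum_pow hs (k + 1)
      _ = _ := by
          rw [Nat.choose_succ_succ' (k + 2) 1, Nat.choose_one_right]
          push_cast
          ring

end ElementarySymmetric

lemma pow_succ_le_pow_succ_add {R : Type*} [CommRing R] [PartialOrder R] [IsOrderedRing R]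
    {a b : R} (ha : 0 ≤ a) (hab : a ≤ b) (k : ℕ) :
    b ^ (k + 1) ≤ a ^ (k + 1) + (k + 1) * ((b - a) * b ^ k) := by
  induction k with
  | zero => simp
  | succ k ih =>
    have : 0 ≤ b - a := sub_nonneg.2 hab
    calc b ^ (k + 2) = b * b ^ (k + 1) := pow_succ' _ _
      _ ≤ b * (a ^ (k + 1) + (k + 1) * ((b - a) * b ^ k)) := by gcongr; exact ha.trans hab
      _ = a ^ (k + 2) + (b - a) * a ^ (k + 1) + (k + 1) * ((b - a) * b ^ (k + 1)) := by ring
      _ ≤ a ^ (k + 2) + (b - a) * b ^ (k + 1) + (k + 1) * ((b - a) * b ^ (k + 1)) := by gcongr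
      _ = a ^ (k + 2) + (↑(k + 1) + 1) * ((b - a) * b ^ (k + 1)) := by push_cast; ring

section CoeffwiseOrder

variable {R : Type*} [CommRing R] [PartialOrder R]

/-- The coefficientwise order on formal power series, for which a power series with nonnegative
coefficients is nonnegative. -/
noncomputable abbrev coeffwisePartialOrder : PartialOrder R⟦X⟧ :=
  PartialOrder.lift (fun p n => PowerSeries.coeff n p) fun _ _ h => PowerSeries.ext (congrFun h)

attribute [local instance] coeffwisePartialOrder

lemma coeffwise_le_iff {p q : R⟦X⟧} :
    p ≤ q ↔ ∀ n, PowerSeries.coeff n p ≤ PowerSeries.coeff n q :=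
  Iff.rfl

lemma coeffwise_nonneg_iff {p : R⟦X⟧} : 0 ≤ p ↔ ∀ n, 0 ≤ PowerSeries.coeff n p := by
  simp only [coeffwise_le_iff, map_zero]

lemma coeffwiseIsOrderedRing [IsOrderedRing R] : IsOrderedRing R⟦X⟧ :=
  haveI : IsOrderedAddMonoid R⟦X⟧ :=
    { add_le_add_left := fun p q h r => coeffwise_le_iff.2 fun n => by
        simpa only [map_add] using add_le_add_left (coeffwise_le_iff.1 h n) _ }
  haveI : ZeroLEOneClass R⟦X⟧ :=
    ⟨coeffwise_nonneg_iff.2 fun n => by rw [PowerSeries.coeff_one]; split_ifs <;> simp⟩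
  .of_mul_nonneg fun p q hp hq => coeffwise_nonneg_iff.2 fun n => by
    rw [PowerSeries.coeff_mul]
    exact sum_nonneg fun ij _ =>
      mul_nonneg (coeffwise_nonneg_iff.1 hp ij.1) (coeffwise_nonneg_iff.1 hq ij.2)

end CoeffwiseOrder

section Multichoose

open Ring (multichoose)

lemma multichoose_eq_prod_div_factorial (α : ℝ) (n : ℕ) :
    multichoose α n = (∏ j ∈ range n, (α + j)) / n ! := by
  rw [eq_div_iff (by positivity), mul_comm, ← nsmul_eq_mul,
    Ring.factorial_nsmul_multichoose_eq_ascPochhammer, Polynomial.ascPochhammer_smeval_eq_eval]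
  induction n with
  | zero => simp
  | succ n ih => rw [ascPochhammer_succ_eval, ih, prod_range_succ]

lemma succ_mul_multichoose_succ (α : ℝ) (n : ℕ) :
    (n + 1) * multichoose α (n + 1) = (α + n) * multichoose α n := by
  rw [multichoose_eq_prod_div_factorial, multichoose_eq_prod_div_factorial, prod_range_succ,
    Nat.factorial_succ]
  push_cast
  field_simp

lemma multichoose_nonneg {α : ℝ} (hα : 0 ≤ α) (n : ℕ) : 0 ≤ multichoose α n := by
  rw [multichoose_eq_prod_div_factorial]
  positivity

lemma antitone_multichoose {α : ℝ} (hα : 0 ≤ α) (hα1 : α ≤ 1) : Antitone (multichoose α) := by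
  refine antitone_nat_of_succ_le fun n => le_of_mul_le_mul_left ?_ n.cast_add_one_pos
  rw [succ_mul_multichoose_succ]
  exact mul_le_mul_of_nonneg_right (by linarith) (multichoose_nonneg hα n)

lemma multichoose_le_one {α : ℝ} (hα : 0 ≤ α) (hα1 : α ≤ 1) (n : ℕ) : multichoose α n ≤ 1 := by
  simpa using antitone_multichoose hα hα1 n.zero_le

lemma monotone_mul_multichoose {α : ℝ} (hα : 0 ≤ α) :
    Monotone fun n : ℕ => (n : ℝ) * multichoose α n := by
  refine monotone_nat_of_le_succ fun n => ?_
  push_cast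
  rw [succ_mul_multichoose_succ]
  gcongr
  · exact multichoose_nonneg hα n
  · linarith

lemma multichoose_le_two_mul_multichoose_two_mul {α : ℝ} (hα : 0 ≤ α) (n : ℕ) :
    multichoose α n ≤ 2 * multichoose α (2 * n) := by
  rcases n.eq_zero_or_pos with rfl | hn
  · simp
  · refine le_of_mul_le_mul_left ?_ (Nat.cast_pos.2 hn : (0 : ℝ) < n)
    calc (n : ℝ) * multichoose α n
        ≤ (2 * n : ℕ) * multichoose α (2 * n) := monotone_mul_multichoose hα (by lia)
      _ = n * (2 * multichoose α (2 * n)) := by push_cast; ring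

lemma tendsto_rpow_mul_multichoose {α : ℝ} (hα : 0 < α) :
    Tendsto (fun n : ℕ => (n : ℝ) ^ (1 - α) * multichoose α n) atTop (𝓝 (Real.Gamma α)⁻¹) := by
  have hquot : Tendsto (fun n : ℕ => ((n : ℝ) / (n + α)) / Real.GammaSeq α n) atTop
      (𝓝 (1 / Real.Gamma α)) :=
    (tendsto_natCast_div_add_atTop α).div (Real.GammaSeq_tendsto_Gamma α)
      (Real.Gamma_pos_of_pos hα).ne'
  rw [one_div] at hquot
  refine hquot.congr' ?_
  filter_upwards [eventually_gt_atTop 0] with n hn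
  have hn' : (0 : ℝ) < n := Nat.cast_pos.2 hn
  have hprod : ∏ j ∈ range n, (α + j) ≠ 0 := prod_ne_zero_iff.2 fun j _ => by positivity
  rw [Real.GammaSeq, multichoose_eq_prod_div_factorial, prod_range_succ, Real.rpow_sub hn',
    Real.rpow_one]
  field_simp
  ring

lemma isEquivalent_rpow_multichoose {α : ℝ} (hα : 0 < α) :
    (fun n : ℕ => (n : ℝ) ^ (-1 + α)) ~[atTop] fun n => Real.Gamma α * multichoose α n := by
  have hΓ := (Real.Gamma_pos_of_pos hα).ne'
  refine (isEquivalent_of_tendsto_one ?_).symm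
  have hlim := (tendsto_rpow_mul_multichoose hα).const_mul (Real.Gamma α)
  rw [mul_inv_cancel₀ hΓ] at hlim
  refine hlim.congr fun n => ?_
  rw [Pi.div_apply, show -1 + α = -(1 - α) by ring, Real.rpow_neg n.cast_nonneg, div_inv_eq_mul]
  ring

lemma tendsto_multichoose_zero {α : ℝ} (hα : 0 < α) (hα1 : α < 1) :
    Tendsto (multichoose α) atTop (𝓝 0) := by
  have hrpow : Tendsto (fun n : ℕ => (n : ℝ) ^ (-(1 - α))) atTop (𝓝 0) :=
    (tendsto_rpow_neg_atTop (sub_pos.2 hα1)).comp tendsto_natCast_atTop_atTop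
  have hlim := hrpow.mul (tendsto_rpow_mul_multichoose hα)
  rw [zero_mul] at hlim
  refine hlim.congr' ?_
  filter_upwards [eventually_gt_atTop 0] with n hn
  rw [← mul_assoc, ← Real.rpow_add (Nat.cast_pos.2 hn), neg_add_cancel, Real.rpow_zero, one_mul]

/-- The expansion of `(1 - X) ^ (-α)`. -/
noncomputable def multichooseSeries (α : ℝ) : ℝ⟦X⟧ :=
  PowerSeries.mk (multichoose α)

lemma coeff_multichooseSeries (α : ℝ) (n : ℕ) :
    PowerSeries.coeff n (multichooseSeries α) = multichoose α n :=
  PowerSeries.coeff_mk _ _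

lemma multichooseSeries_eq_rescale (α : ℝ) :
    multichooseSeries α = PowerSeries.rescale (-1) (PowerSeries.binomialSeries ℝ (-α)) := by
  ext n
  have hsign : (-1 : ℝ) ^ n * (-1) ^ n = 1 := by rw [← mul_pow, neg_one_mul, neg_neg, one_pow]
  rw [coeff_multichooseSeries, PowerSeries.coeff_rescale, PowerSeries.binomialSeries_coeff,
    Ring.choose_neg', Units.smul_def, zsmul_eq_mul, Int.cast_negOnePow_natCast, smul_eq_mul,
    mul_one, ← mul_assoc, hsign, one_mul]

lemma multichooseSeries_pow (α : ℝ) (k : ℕ) :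
    multichooseSeries α ^ k = multichooseSeries (k * α) := by
  simp only [multichooseSeries_eq_rescale, ← map_pow]
  congr 1
  induction k with
  | zero => simp
  | succ k ih =>
    rw [pow_succ, ih, ← PowerSeries.binomialSeries_add]
    congr 1
    push_cast
    ring

end Multichoose

section IsobaricEsymm

variable {R : Type*}

/-- The sum of `∏ x ∈ W, f x` over the `k`-element subsets `W` of `H` whose elements add up to
`m`: the part of weight `m` of the elementary symmetric function of degree `k` in the values of
`f` on `H`, a value `f x` having weight `x`. -/
def isobaricEsymm [CommSemiring R] (f : ℕ → R) (H : Finset ℕ) (k m : ℕ) : R :=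
  ∑ W ∈ powersetCard k H with ∑ x ∈ W, x = m, ∏ x ∈ W, f x

lemma isobaricEsymm_const_mul [CommSemiring R] (a : R) (f : ℕ → R) (H : Finset ℕ)
    (k m : ℕ) : isobaricEsymm (fun x => a * f x) H k m = a ^ k * isobaricEsymm f H k m := by
  rw [isobaricEsymm, isobaricEsymm, mul_sum]
  refine sum_congr rfl fun W hW => ?_
  rw [prod_mul_distrib, prod_const, (mem_powersetCard.1 (mem_filter.1 hW).1).2]

lemma coeff_esymm_monomial [CommSemiring R] (f : ℕ → R) (H : Finset ℕ) (k m : ℕ) :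
    PowerSeries.coeff m ((H.val.map fun x => PowerSeries.monomial x (f x)).esymm k) =
      isobaricEsymm f H k m := by
  simp only [Finset.esymm_map_val, PowerSeries.prod_monomial, map_sum, PowerSeries.coeff_monomial,
    isobaricEsymm, sum_filter, eq_comm]

lemma coeff_sum_monomial [CommSemiring R] (f : ℕ → R) (H : Finset ℕ) (m : ℕ) :
    PowerSeries.coeff m (∑ x ∈ H, PowerSeries.monomial x (f x)) = if m ∈ H then f m else 0 := by
  simp only [map_sum, PowerSeries.coeff_monomial, sum_ite_eq]

variable [CommRing R] [PartialOrder R] {f : ℕ → R}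

attribute [local instance] coeffwisePartialOrder

lemma monomial_nonneg (hf : ∀ x, 0 ≤ f x) (x : ℕ) :
    0 ≤ PowerSeries.monomial x (f x) := by
  refine coeffwise_nonneg_iff.2 fun m => ?_
  rw [PowerSeries.coeff_monomial]
  split_ifs
  · exact hf x
  · exact le_rfl

lemma sum_monomial_le_mk (hf : ∀ x, 0 ≤ f x) (H : Finset ℕ) :
    ∑ x ∈ H, PowerSeries.monomial x (f x) ≤ PowerSeries.mk f := by
  refine coeffwise_le_iff.2 fun m => ?_
  rw [coeff_sum_monomial, PowerSeries.coeff_mk]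
  split_ifs
  · exact le_rfl
  · exact hf m

variable [IsOrderedRing R]

attribute [local instance] coeffwiseIsOrderedRing

lemma factorial_mul_isobaricEsymm_le (hf : ∀ x, 0 ≤ f x) (H : Finset ℕ) (k m : ℕ) :
    k ! * isobaricEsymm f H k m ≤ PowerSeries.coeff m (PowerSeries.mk f ^ k) := by
  have hmon : ∀ p ∈ H.val.map fun x => PowerSeries.monomial x (f x), 0 ≤ p := by
    simpa using fun x _ => monomial_nonneg hf x
  have hle : k ! * (H.val.map fun x => PowerSeries.monomial x (f x)).esymm k ≤
      PowerSeries.mk f ^ k :=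
    (factorial_mul_esymm_le_sum_pow hmon k).trans
      (pow_le_pow_left₀ (Multiset.sum_nonneg hmon) (sum_monomial_le_mk hf H) k)
  have hcoeff := coeffwise_le_iff.1 hle m
  rwa [← nsmul_eq_mul, map_nsmul, nsmul_eq_mul, coeff_esymm_monomial] at hcoeff

/-- Tuples with an entry outside `H` and tuples with a repeated entry are the ones not counted by
`isobaricEsymm f H`. -/
lemma coeff_pow_le_factorial_mul_isobaricEsymm_add (hf : ∀ x, 0 ≤ f x) (H : Finset ℕ) (k m : ℕ) :
    PowerSeries.coeff m (PowerSeries.mk f ^ (k + 2)) ≤ (k + 2)! * isobaricEsymm f H (k + 2) m +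
      (k + 2 : ℕ) * PowerSeries.coeff m
        ((PowerSeries.mk f - ∑ x ∈ H, PowerSeries.monomial x (f x)) * PowerSeries.mk f ^ (k + 1)) +
      (k + 2).choose 2 * PowerSeries.coeff m
        ((∑ x ∈ H, PowerSeries.monomial (x + x) (f x * f x)) * PowerSeries.mk f ^ k) := by
  set F := PowerSeries.mk f
  set B := ∑ x ∈ H, PowerSeries.monomial x (f x)
  set E := (H.val.map fun x => PowerSeries.monomial x (f x)).esymm (k + 2) with hE
  set D := ∑ x ∈ H, PowerSeries.monomial (x + x) (f x * f x)
  have hmon : ∀ p ∈ H.val.map fun x => PowerSeries.monomial x (f x), 0 ≤ p := by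
    simpa using fun x _ => monomial_nonneg hf x
  have hB : 0 ≤ B := sum_nonneg fun x _ => monomial_nonneg hf x
  have hBF : B ≤ F := sum_monomial_le_mk hf H
  have hD : 0 ≤ D := sum_nonneg fun x _ => by
    rw [← PowerSeries.monomial_mul_monomial]
    exact mul_nonneg (monomial_nonneg hf x) (monomial_nonneg hf x)
  have hesymm : B ^ (k + 2) ≤ (k + 2)! * E + (k + 2).choose 2 * (D * B ^ k) := by
    have hnewton := sum_pow_le_factorial_mul_esymm_add hmon k
    simp only [Multiset.map_map, Function.comp_def, pow_two,
      PowerSeries.monomial_mul_monomial] at hnewton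
    exact hnewton
  have hle : F ^ (k + 2) ≤ (k + 2)! * E + ((k + 2 : ℕ) : R⟦X⟧) * ((F - B) * F ^ (k + 1)) +
      (k + 2).choose 2 * (D * F ^ k) := calc
    F ^ (k + 2) ≤ B ^ (k + 2) + (↑(k + 1) + 1) * ((F - B) * F ^ (k + 1)) :=
        pow_succ_le_pow_succ_add hB hBF (k + 1)
    _ ≤ (k + 2)! * E + (k + 2).choose 2 * (D * F ^ k) +
          (↑(k + 1) + 1) * ((F - B) * F ^ (k + 1)) := by
        gcongr
        exact hesymm.trans (by gcongr)
    _ = _ := by push_cast; ring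
  have hcoeff := coeffwise_le_iff.1 hle m
  simpa only [map_add, ← nsmul_eq_mul, map_nsmul, hE, coeff_esymm_monomial] using hcoeff

end IsobaricEsymm

section IsobaricEsymmMultichoose

open Ring (multichoose)

variable {α β : ℝ} {t m n : ℕ}

lemma factorial_mul_isobaricEsymm_multichoose_le (hα : 0 ≤ α) (H : Finset ℕ) (k m : ℕ) :
    k ! * isobaricEsymm (multichoose α) H k m ≤ multichoose (k * α) m := by
  have hle := factorial_mul_isobaricEsymm_le (multichoose_nonneg hα) H k m
  rwa [← multichooseSeries, multichooseSeries_pow, coeff_multichooseSeries] at hle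

lemma coeff_multichooseSeries_sub_mul_le (hα : 0 ≤ α) (hα1 : α ≤ 1) (hβ : 0 ≤ β) (hβ1 : β ≤ 1)
    (htm : 2 * t ≤ m) (hmn : m ≤ n) :
    PowerSeries.coeff m ((multichooseSeries α -
        ∑ x ∈ Ioc t n, PowerSeries.monomial x (multichoose α x)) * multichooseSeries β) ≤
      (t + 1) * (2 * multichoose β m) := by
  have hterm : ∀ i ∈ range (m + 1), PowerSeries.coeff i (multichooseSeries α -
        ∑ x ∈ Ioc t n, PowerSeries.monomial x (multichoose α x)) * multichoose β (m - i) ≤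
      if i < t + 1 then 2 * multichoose β m else 0 := by
    intro i hi
    rw [mem_range] at hi
    rw [map_sub, coeff_sum_monomial, coeff_multichooseSeries]
    split_ifs with hIoc ht ht
    · exact absurd (mem_Ioc.1 hIoc).1 (by lia)
    · simp
    · calc (multichoose α i - 0) * multichoose β (m - i)
          ≤ 1 * multichoose β (m - i) := by
            rw [sub_zero]
            gcongr
            · exact multichoose_nonneg hβ _
            · exact multichoose_le_one hα hα1 i
        _ ≤ 2 * multichoose β (2 * (m - i)) := by
            rw [one_mul]; exact multichoose_le_two_mul_multichoose_two_mul hβ _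
        _ ≤ 2 * multichoose β m := by gcongr; exact antitone_multichoose hβ hβ1 (by lia)
    · exact absurd (mem_Ioc.2 ⟨by lia, by lia⟩) hIoc
  rw [PowerSeries.coeff_mul, Nat.sum_antidiagonal_eq_sum_range_succ_mk]
  simp only [coeff_multichooseSeries β]
  refine (sum_le_sum hterm).trans ?_
  rw [← sum_filter, sum_const, nsmul_eq_mul]
  refine mul_le_mul_of_nonneg_right ?_ (mul_nonneg zero_le_two (multichoose_nonneg hβ m))
  have hcard : #{i ∈ range (m + 1) | i < t + 1} ≤ t + 1 :=
    (card_le_card fun i hi => mem_range.2 (mem_filter.1 hi).2).trans (card_range _).le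
  exact_mod_cast hcard

attribute [local instance] coeffwisePartialOrder coeffwiseIsOrderedRing

lemma sum_monomial_multichoose_sq_le (hα : 0 ≤ α) (hα1 : α ≤ 1) :
    ∑ x ∈ Ioc t n, PowerSeries.monomial (x + x) (multichoose α x * multichoose α x) ≤
      PowerSeries.C (2 * multichoose α t) * multichooseSeries α := by
  have hC : 0 ≤ PowerSeries.C (2 * multichoose α t) := coeffwise_nonneg_iff.2 fun j => by
    rw [PowerSeries.coeff_C]
    split_ifs
    · exact mul_nonneg zero_le_two (multichoose_nonneg hα t)
    · exact le_rfl
  calc ∑ x ∈ Ioc t n, PowerSeries.monomial (x + x) (multichoose α x * multichoose α x)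
      ≤ ∑ x ∈ Ioc t n, PowerSeries.C (2 * multichoose α t) *
          PowerSeries.monomial (2 * x) (multichoose α (2 * x)) := by
        refine sum_le_sum fun x hx => coeffwise_le_iff.2 fun j => ?_
        rw [PowerSeries.coeff_C_mul, PowerSeries.coeff_monomial, PowerSeries.coeff_monomial,
          ← two_mul]
        split_ifs
        · calc multichoose α x * multichoose α x
              ≤ multichoose α t * (2 * multichoose α (2 * x)) := by
                gcongr
                · exact multichoose_nonneg hα x
                · exact multichoose_nonneg hα t
                · exact antitone_multichoose hα hα1 (mem_Ioc.1 hx).1.le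
                · exact multichoose_le_two_mul_multichoose_two_mul hα x
            _ = 2 * multichoose α t * multichoose α (2 * x) := by ring
        · rw [mul_zero]
    _ = PowerSeries.C (2 * multichoose α t) *
          ∑ x ∈ (Ioc t n).image (2 * ·), PowerSeries.monomial x (multichoose α x) := by
        rw [← mul_sum, sum_image fun x _ y _ h => by lia]
    _ ≤ PowerSeries.C (2 * multichoose α t) * multichooseSeries α := by
        gcongr
        exact sum_monomial_le_mk (multichoose_nonneg hα) _

lemma coeff_sum_monomial_multichoose_sq_mul_le (hα : 0 ≤ α) {k : ℕ} (hk : (k + 1) * α ≤ 1) :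
    PowerSeries.coeff m
        ((∑ x ∈ Ioc t n, PowerSeries.monomial (x + x) (multichoose α x * multichoose α x)) *
          multichooseSeries α ^ k) ≤
      2 * multichoose α t := by
  have hα1 : α ≤ 1 := by nlinarith [mul_nonneg k.cast_nonneg hα]
  have hpow : 0 ≤ multichooseSeries α ^ k := pow_nonneg
    (coeffwise_nonneg_iff.2 fun j => by
      rw [coeff_multichooseSeries]; exact multichoose_nonneg hα j) k
  have hle := coeffwise_le_iff.1
    (mul_le_mul_of_nonneg_right (sum_monomial_multichoose_sq_le (t := t) (n := n) hα hα1) hpow) m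
  rw [mul_assoc, ← pow_succ', multichooseSeries_pow α (k + 1), PowerSeries.coeff_C_mul,
    coeff_multichooseSeries, Nat.cast_add_one] at hle
  refine hle.trans (mul_le_of_le_one_right ?_ (multichoose_le_one (by positivity) hk m))
  exact mul_nonneg zero_le_two (multichoose_nonneg hα t)

lemma multichoose_le_factorial_mul_isobaricEsymm_add (hα : 0 ≤ α) {k : ℕ} (hk : (k + 1) * α ≤ 1)
    (htm : 2 * t ≤ m) (hmn : m ≤ n) :
    multichoose ((k + 2) * α) m ≤
      (k + 2)! * isobaricEsymm (multichoose α) (Ioc t n) (k + 2) m +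
        (k + 2) * ((t + 1) * (2 * multichoose ((k + 1) * α) m)) +
        (k + 2).choose 2 * (2 * multichoose α t) := by
  have hα1 : α ≤ 1 := by nlinarith [mul_nonneg k.cast_nonneg hα]
  have hsub := coeff_multichooseSeries_sub_mul_le hα hα1 (by positivity) hk htm hmn
  have hsq := coeff_sum_monomial_multichoose_sq_mul_le (t := t) (n := n) (m := m) hα hk
  have hle := coeff_pow_le_factorial_mul_isobaricEsymm_add (multichoose_nonneg hα) (Ioc t n) k m
  rw [← multichooseSeries, multichooseSeries_pow, coeff_multichooseSeries,
    multichooseSeries_pow α (k + 1)] at hle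
  push_cast at hle
  refine hle.trans ?_
  gcongr

end IsobaricEsymmMultichoose

section UniformAsymptotics

variable {ι κ : Type*}

/-- The filter of pairs `(i, j)` with `j ∈ A i` along which `i` runs through `l`: a limit along it
is a limit of `i` along `l` that is uniform in `j ∈ A i`. -/
def fiberFilter (l : Filter ι) (A : ι → Finset κ) : Filter (ι × κ) :=
  comap Prod.fst l ⊓ 𝓟 {p | p.2 ∈ A p.1}

variable {l : Filter ι} {A : ι → Finset κ}

lemma eventually_fiberFilter {P : ι × κ → Prop} :
    (∀ᶠ p in fiberFilter l A, P p) ↔ ∀ᶠ i in l, ∀ j ∈ A i, P (i, j) := by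
  rw [fiberFilter, eventually_inf_principal, eventually_comap]
  refine eventually_congr (Eventually.of_forall fun i => ?_)
  exact ⟨fun h j hj => h (i, j) rfl hj, fun h p hp hmem => by subst hp; exact h p.2 hmem⟩

lemma tendsto_fst_fiberFilter : Tendsto Prod.fst (fiberFilter l A) l :=
  tendsto_comap.mono_left inf_le_left

lemma isEquivalent_sum {u v : ι → κ → ℝ} (hv : ∀ i, ∀ j ∈ A i, 0 ≤ v i j)
    (huv : (fun p : ι × κ => u p.1 p.2) ~[fiberFilter l A] fun p => v p.1 p.2) :
    (fun i => ∑ j ∈ A i, u i j) ~[l] fun i => ∑ j ∈ A i, v i j := by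
  refine isLittleO_iff.2 fun ε hε => ?_
  filter_upwards [eventually_fiberFilter.1 (isLittleO_iff.1 huv hε)] with i hi
  calc ‖∑ j ∈ A i, u i j - ∑ j ∈ A i, v i j‖ = ‖∑ j ∈ A i, (u i j - v i j)‖ := by
        rw [sum_sub_distrib]
    _ ≤ ∑ j ∈ A i, ‖u i j - v i j‖ := norm_sum_le _ _
    _ ≤ ∑ j ∈ A i, ε * v i j := sum_le_sum fun j hj =>
        (hi j hj).trans_eq (by rw [Real.norm_of_nonneg (hv i j hj)])
    _ = ε * ‖∑ j ∈ A i, v i j‖ := by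
        rw [← mul_sum, Real.norm_of_nonneg (sum_nonneg (hv i))]

lemma abs_prod_sub_prod_le {f g : κ → ℝ} {η : ℝ} {W : Finset κ} (hη : 0 ≤ η)
    (hg : ∀ x ∈ W, 0 ≤ g x) (hfg : ∀ x ∈ W, |f x - g x| ≤ η * g x) :
    |∏ x ∈ W, f x - ∏ x ∈ W, g x| ≤ ((1 + η) ^ #W - 1) * ∏ x ∈ W, g x := by
  classical
  induction W using Finset.induction_on with
  | empty => simp
  | insert a W ha ih =>
    rw [forall_mem_insert] at hg hfg
    have hprod : 0 ≤ ∏ x ∈ W, g x := prod_nonneg hg.2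
    have : 1 ≤ (1 + η) ^ #W := one_le_pow₀ (by linarith)
    have ih := ih hg.2 hfg.2
    rw [prod_insert ha, prod_insert ha, card_insert_of_notMem ha]
    set F := ∏ x ∈ W, f x
    set G := ∏ x ∈ W, g x
    calc |f a * F - g a * G|
        = |(f a - g a) * (F - G) + (f a - g a) * G + g a * (F - G)| := by congr 1; ring
      _ ≤ |f a - g a| * |F - G| + |f a - g a| * G + g a * |F - G| := by
          refine (abs_add_three _ _ _).trans_eq ?_
          rw [abs_mul, abs_mul, abs_mul, abs_of_nonneg hprod, abs_of_nonneg hg.1]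
      _ ≤ η * g a * (((1 + η) ^ #W - 1) * G) + η * g a * G + g a * (((1 + η) ^ #W - 1) * G) := by
          gcongr
          · exact mul_nonneg hη hg.1
          · exact hfg.1
          · exact hfg.1
          · exact hg.1
      _ = ((1 + η) ^ (#W + 1) - 1) * (g a * G) := by ring

lemma isEquivalent_isobaricEsymm {f g : ℕ → ℝ} (hg : ∀ x, 0 ≤ g x) (hfg : f ~[atTop] g)
    {t m n : ι → ℕ} (ht : Tendsto t l atTop) (k : ℕ) :
    (fun i => isobaricEsymm f (Ioc (t i) (n i)) k (m i)) ~[l]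
      fun i => isobaricEsymm g (Ioc (t i) (n i)) k (m i) := by
  refine isEquivalent_sum (fun i W _ => prod_nonneg fun x _ => hg x) (isLittleO_iff.2 ?_)
  intro ε hε
  have hcont : Tendsto (fun η : ℝ => (1 + η) ^ k - 1) (𝓝[>] 0) (𝓝 0) := by
    have : Continuous fun η : ℝ => (1 + η) ^ k - 1 := by fun_prop
    simpa using (this.tendsto 0).mono_left nhdsWithin_le_nhds
  obtain ⟨η, hηε, hη⟩ := ((hcont.eventually_le_const hε).and self_mem_nhdsWithin).exists
  rw [eventually_fiberFilter]
  filter_upwards [ht.eventually_forall_ge_atTop (isLittleO_iff.1 hfg hη)] with i hi W hW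
  obtain ⟨hWsub, hWcard⟩ := mem_powersetCard.1 (mem_filter.1 hW).1
  have hclose : ∀ x ∈ W, |f x - g x| ≤ η * g x := fun x hx => by
    simpa [abs_of_nonneg (hg x)] using hi x (mem_Ioc.1 (hWsub hx)).1.le
  have hprod := abs_prod_sub_prod_le (le_of_lt hη) (fun x _ => hg x) hclose
  rw [hWcard] at hprod
  rw [Pi.sub_apply, Real.norm_eq_abs, Real.norm_of_nonneg (prod_nonneg fun x _ => hg x)]
  exact hprod.trans (mul_le_mul_of_nonneg_right hηε (prod_nonneg fun x _ => hg x))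

end UniformAsymptotics

section IsobaricEsymmLimit

open Ring (multichoose)

variable {ι : Type*} {l : Filter ι} {t m n : ι → ℕ} {s : ℕ}

lemma eventually_two_mul_le_of_isLittleO_rpow {a : ℝ} (ha : 0 < a) (ha1 : a ≤ 1)
    (htm : (fun i => (t i : ℝ)) =o[l] fun i => (m i : ℝ) ^ a) : ∀ᶠ i in l, 2 * t i ≤ m i := by
  filter_upwards [htm.bound one_half_pos] with i hi
  rw [Real.norm_natCast, Real.norm_of_nonneg (by positivity)] at hi
  have hself : (m i : ℝ) ^ a ≤ m i := by
    rcases (m i).eq_zero_or_pos with hm | hm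
    · simp [hm, Real.zero_rpow ha.ne']
    · exact Real.rpow_le_self_of_one_le (Nat.one_le_cast.2 hm) ha1
  exact_mod_cast (by linarith : (2 : ℝ) * t i ≤ m i)

lemma tendsto_succ_mul_multichoose {β : ℝ} (hβ : 0 < β) (hβ1 : β < 1) (hm : Tendsto m l atTop)
    (htm : (fun i => (t i : ℝ)) =o[l] fun i => (m i : ℝ) ^ (1 - β)) :
    Tendsto (fun i => (t i + 1) * multichoose β (m i)) l (𝓝 0) := by
  have hpow : Tendsto (fun i => (m i : ℝ) ^ (1 - β)) l atTop :=
    (tendsto_rpow_atTop (sub_pos.2 hβ1)).comp (tendsto_natCast_atTop_atTop.comp hm)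
  have hquot : Tendsto (fun i => ((t i : ℝ) + 1) / (m i : ℝ) ^ (1 - β)) l (𝓝 0) :=
    (htm.add (isLittleO_const_left.2
      (Or.inr (tendsto_norm_atTop_atTop.comp hpow)))).tendsto_div_nhds_zero
  have hlim := hquot.mul ((tendsto_rpow_mul_multichoose hβ).comp hm)
  rw [zero_mul] at hlim
  refine hlim.congr' ?_
  filter_upwards [hpow.eventually_gt_atTop 0] with i hi
  rw [Function.comp_apply, ← mul_assoc, div_mul_cancel₀ _ hi.ne']

lemma tendsto_factorial_mul_isobaricEsymm_multichoose (hs : 2 ≤ s) (ht : Tendsto t l atTop)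
    (htm : (fun i => (t i : ℝ)) =o[l] fun i => (m i : ℝ) ^ (1 / s : ℝ))
    (hmn : ∀ᶠ i in l, m i ≤ n i) :
    Tendsto (fun i => s ! * isobaricEsymm (multichoose (1 / s : ℝ)) (Ioc (t i) (n i)) s (m i)) l
      (𝓝 1) := by
  obtain ⟨k, rfl⟩ := Nat.exists_eq_add_of_le' hs
  set α : ℝ := 1 / (k + 2 : ℕ) with hα
  have hα0 : 0 < α := by positivity
  have hα1 : α < 1 := by
    rw [hα, div_lt_one (by positivity)]
    exact_mod_cast hs
  have hsum : (k + 2) * α = 1 := by rw [hα]; push_cast; field_simp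
  have hsum' : (k + 1) * α = 1 - α := by linear_combination hsum
  have htwo : ∀ᶠ i in l, 2 * t i ≤ m i := eventually_two_mul_le_of_isLittleO_rpow hα0 hα1.le htm
  have hm : Tendsto m l atTop := tendsto_atTop_mono' l (htwo.mono fun i hi => by lia) ht
  have hfar : Tendsto (fun i => (t i + 1) * multichoose (1 - α) (m i)) l (𝓝 0) :=
    tendsto_succ_mul_multichoose (sub_pos.2 hα1) (sub_lt_self 1 hα0) hm (by rwa [sub_sub_cancel])
  have hrep : Tendsto (fun i => multichoose α (t i)) l (𝓝 0) :=
    (tendsto_multichoose_zero hα0 hα1).comp ht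
  have hlower : Tendsto (fun i => 1 - (2 * (k + 2) * ((t i + 1) * multichoose (1 - α) (m i)) +
      2 * (k + 2).choose 2 * multichoose α (t i))) l (𝓝 1) := by
    simpa using tendsto_const_nhds.sub
      ((hfar.const_mul (2 * (k + 2) : ℝ)).add (hrep.const_mul (2 * (k + 2).choose 2 : ℝ)))
  refine tendsto_of_tendsto_of_tendsto_of_le_of_le' hlower tendsto_const_nhds ?_ ?_
  · filter_upwards [htwo, hmn] with i htm hmn
    have hle := multichoose_le_factorial_mul_isobaricEsymm_add (k := k) hα0.le (by linarith)
      htm hmn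
    rw [hsum, hsum', Ring.multichoose_one] at hle
    linarith
  · refine Eventually.of_forall fun i => ?_
    have hle := factorial_mul_isobaricEsymm_multichoose_le hα0.le (Ioc (t i) (n i)) (k + 2) (m i)
    rwa [Nat.cast_add, Nat.cast_two, hsum, Ring.multichoose_one] at hle

lemma tendsto_isobaricEsymm_rpow (hs : 2 ≤ s) (ht : Tendsto t l atTop)
    (htm : (fun i => (t i : ℝ)) =o[l] fun i => (m i : ℝ) ^ (1 / s : ℝ))
    (hmn : ∀ᶠ i in l, m i ≤ n i) :
    Tendsto (fun i => isobaricEsymm (fun x => (x : ℝ) ^ (-1 + 1 / s : ℝ)) (Ioc (t i) (n i)) s (m i))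
      l (𝓝 (Real.Gamma (1 / s) ^ s / s !)) := by
  have hα : (0 : ℝ) < 1 / s := by positivity
  have hΓ : 0 < Real.Gamma (1 / s) := Real.Gamma_pos_of_pos hα
  have hequiv := isEquivalent_isobaricEsymm (n := n) (m := m)
    (fun x => mul_nonneg hΓ.le (multichoose_nonneg hα.le x)) (isEquivalent_rpow_multichoose hα) ht s
  refine hequiv.symm.tendsto_nhds ?_
  have hlim := (tendsto_factorial_mul_isobaricEsymm_multichoose hs ht htm hmn).const_mul
    (Real.Gamma (1 / s) ^ s / s !)
  rw [mul_one] at hlim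
  refine hlim.congr fun i => ?_
  rw [isobaricEsymm_const_mul, ← mul_assoc, div_mul_cancel₀ _ (by positivity)]

end IsobaricEsymmLimit

section Analytic

variable {ι κ : Type*} {l : Filter ι} {A : ι → Finset κ}

lemma isEquivalent_neg_log_one_sub : (fun x : ℝ => -Real.log (1 - x)) ~[𝓝 0] id := by
  have hderiv : HasDerivAt (fun x : ℝ => -Real.log (1 - x)) 1 0 := by
    simpa using (((hasDerivAt_id (0 : ℝ)).const_sub 1).log (by simp)).fun_neg
  refine hderiv.isLittleO.congr (fun x => ?_) fun x => ?_ <;> simp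

lemma isEquivalent_neg_log_prod_one_sub {p : ι → κ → ℝ} (hp : ∀ i, ∀ j ∈ A i, 0 ≤ p i j)
    (hlim : Tendsto (fun q : ι × κ => p q.1 q.2) (fiberFilter l A) (𝓝 0)) :
    (fun i => -Real.log (∏ j ∈ A i, (1 - p i j))) ~[l] fun i => ∑ j ∈ A i, p i j := by
  have hsum := isEquivalent_sum (u := fun i j => -Real.log (1 - p i j)) hp
    (isEquivalent_neg_log_one_sub.comp_tendsto hlim)
  refine hsum.congr_left ?_
  filter_upwards [eventually_fiberFilter.1 (hlim.eventually_lt_const one_pos)] with i hi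
  rw [Real.log_prod fun j hj => (sub_pos.2 (hi j hj)).ne', sum_neg_distrib]

lemma abs_sum_rpow_sub_le {a : ℝ} (ha : 0 < a) (ha1 : a ≤ 1) {N : ℕ} (hN : 1 ≤ N) :
    |∑ x ∈ Ico 1 N, (x : ℝ) ^ (-1 + a) - (N : ℝ) ^ a / a| ≤ 1 + 1 / a := by
  have hanti : AntitoneOn (fun x : ℝ => x ^ (-1 + a)) (Set.Icc (1 : ℕ) N) := fun x hx y _ hxy =>
    Real.rpow_le_rpow_of_nonpos (by linarith [hx.1, Nat.cast_one (R := ℝ)]) hxy (by linarith)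
  have hint : ∫ x in (1 : ℕ)..(N : ℝ), x ^ (-1 + a) = (N : ℝ) ^ a / a - 1 / a := by
    rw [integral_rpow (Or.inl (by linarith)), neg_add_cancel_comm, Nat.cast_one, Real.one_rpow,
      sub_div]
  have hlower := hanti.integral_le_sum_Ico hN
  have hupper := hanti.sum_le_integral_Ico hN
  rw [hint] at hlower hupper
  have hshift : ∑ x ∈ Ico 1 N, (x : ℝ) ^ (-1 + a) ≤
      ∑ x ∈ Ico 1 N, ((x + 1 : ℕ) : ℝ) ^ (-1 + a) + 1 := by
    have hlast : 0 ≤ (N : ℝ) ^ (-1 + a) := by positivity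
    have htel := sum_Ico_sub (fun x : ℕ => (x : ℝ) ^ (-1 + a)) hN
    rw [sum_sub_distrib, Nat.cast_one, Real.one_rpow] at htel
    linarith
  rw [abs_le]
  have : 0 < 1 / a := by positivity
  constructor <;> linarith

lemma isEquivalent_sum_Ico_rpow {a : ℝ} (ha : 0 < a) (ha1 : a ≤ 1) :
    (fun N : ℕ => ∑ x ∈ Ico 1 N, (x : ℝ) ^ (-1 + a)) ~[atTop] fun N => (N : ℝ) ^ a / a := by
  have hbdd : (fun N : ℕ => ∑ x ∈ Ico 1 N, (x : ℝ) ^ (-1 + a) - (N : ℝ) ^ a / a) =O[atTop]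
      fun _ => (1 : ℝ) := by
    refine IsBigO.of_bound (1 + 1 / a) ?_
    filter_upwards [eventually_ge_atTop 1] with N hN
    simpa using abs_sum_rpow_sub_le ha ha1 hN
  have hatTop : Tendsto (fun N : ℕ => (N : ℝ) ^ a / a) atTop atTop :=
    ((tendsto_rpow_atTop ha).comp tendsto_natCast_atTop_atTop).atTop_div_const ha
  exact hbdd.trans_isLittleO
    (isLittleO_const_left.2 (Or.inr (tendsto_norm_atTop_atTop.comp hatTop)))

lemma prod_rpow_le_div_card_rpow {ω : Finset ℕ} (hω : ∀ x ∈ ω, 1 ≤ x) (hne : ω.Nonempty) {r : ℝ}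
    (hr : r ≤ 0) :
    ∏ x ∈ ω, (x : ℝ) ^ r ≤ ((∑ x ∈ ω, x : ℕ) / #ω : ℝ) ^ r := by
  obtain ⟨x, hx, hmean⟩ : ∃ x ∈ ω, ((∑ x ∈ ω, x : ℕ) / #ω : ℝ) ≤ x := by
    refine exists_le_of_sum_le hne ?_
    rw [sum_const, nsmul_eq_mul, mul_div_cancel₀ _ (Nat.cast_ne_zero.2 hne.card_ne_zero),
      Nat.cast_sum]
  have hsum : 0 < ∑ x ∈ ω, x := sum_pos hω hne
  have : 0 < #ω := hne.card_pos
  have hrest : ∏ y ∈ ω.erase x, (y : ℝ) ^ r ≤ 1 := prod_le_one (fun _ _ => by positivity)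
    fun y hy => Real.rpow_le_one_of_one_le_of_nonpos
      (Nat.one_le_cast.2 (hω y (mem_of_mem_erase hy))) hr
  calc ∏ y ∈ ω, (y : ℝ) ^ r = (x : ℝ) ^ r * ∏ y ∈ ω.erase x, (y : ℝ) ^ r :=
        (mul_prod_erase ω _ hx).symm
    _ ≤ (x : ℝ) ^ r := mul_le_of_le_one_right (by positivity) hrest
    _ ≤ _ := Real.rpow_le_rpow_of_nonpos (by positivity) hmean hr

end Analytic

section Combinatorial

variable {κ M : Type*} [DecidableEq κ] [AddCommMonoid M] {A B : Finset κ}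

lemma insert_inter_eq_singleton (hAB : Disjoint A B) {y : κ} (hy : y ∈ A) {W : Finset κ}
    (hW : W ⊆ B) : insert y W ∩ A = {y} := by
  rw [insert_inter_of_mem hy,
    disjoint_iff_inter_eq_empty.1 (disjoint_of_subset_right hW hAB).symm,
    insert_empty_eq]

lemma insert_sdiff_eq_self (hAB : Disjoint A B) {y : κ} (hy : y ∈ A) {W : Finset κ}
    (hW : W ⊆ B) : insert y W \ A = W := by
  rw [insert_sdiff_of_mem _ hy, sdiff_eq_self_of_disjoint (disjoint_of_subset_right hW hAB).symm]

lemma sum_powersetCard_union_filter_card_inter_eq_one (hAB : Disjoint A B) (k : ℕ)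
    (F : Finset κ → M) :
    ∑ ω ∈ powersetCard (k + 1) (A ∪ B) with #(ω ∩ A) = 1, F ω =
      ∑ y ∈ A, ∑ W ∈ powersetCard k B, F (insert y W) := by
  rw [← sum_product']
  refine (sum_nbij (fun p : κ × Finset κ => insert p.1 p.2) ?_ ?_ ?_ fun _ _ => rfl).symm
  · rintro ⟨y, W⟩ hp
    obtain ⟨hy, hWB, hWk⟩ : y ∈ A ∧ W ⊆ B ∧ #W = k := by simpa using hp
    have hyW : y ∉ W := fun h => disjoint_left.1 hAB hy (hWB h)
    refine mem_filter.2 ⟨mem_powersetCard.2 ⟨?_, ?_⟩, ?_⟩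
    · exact insert_subset (mem_union_left _ hy) (hWB.trans subset_union_right)
    · rw [card_insert_of_notMem hyW, hWk]
    · rw [insert_inter_eq_singleton hAB hy hWB, card_singleton]
  · rintro ⟨y, W⟩ hp ⟨y', W'⟩ hp' (h : insert y W = insert y' W')
    obtain ⟨hy, hWB, -⟩ : y ∈ A ∧ W ⊆ B ∧ #W = k := by simpa using hp
    obtain ⟨hy', hWB', -⟩ : y' ∈ A ∧ W' ⊆ B ∧ #W' = k := by simpa using hp'
    have hyy' : y = y' := singleton_injective (by
      rw [← insert_inter_eq_singleton hAB hy hWB, h, insert_inter_eq_singleton hAB hy' hWB'])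
    have hWW' : W = W' := by
      rw [← insert_sdiff_eq_self hAB hy hWB, h, insert_sdiff_eq_self hAB hy' hWB']
    rw [hyy', hWW']
  · intro ω hω
    obtain ⟨⟨hsub, hcard⟩, hone⟩ : (ω ⊆ A ∪ B ∧ #ω = k + 1) ∧ #(ω ∩ A) = 1 := by simpa using hω
    obtain ⟨y, hy⟩ := card_eq_one.1 hone
    have hyA : y ∈ ω ∩ A := hy ▸ mem_singleton_self y
    have hrest : ω \ A ⊆ B := fun x hx => by
      have := hsub (sdiff_subset hx)
      grind
    have hrestcard : #(ω \ A) = k := by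
      have := card_sdiff_add_card_inter ω A
      lia
    refine ⟨(y, ω \ A), ?_, ?_⟩
    · simpa [hrestcard, hrest] using (mem_inter.1 hyA).2
    · change insert y (ω \ A) = ω
      rw [insert_eq, ← hy, union_comm, sdiff_union_inter]

end Combinatorial

lemma sum_prod_filter_card_inter_eq_one {R : Type*} [CommSemiring R] (f : ℕ → R) {A B : Finset ℕ}
    (hAB : Disjoint A B) (k : ℕ) {n : ℕ} (hA : ∀ y ∈ A, y ≤ n) :
    ∑ ω ∈ powersetCard (k + 1) (A ∪ B) with #(ω ∩ A) = 1 ∧ ∑ x ∈ ω, x = n, ∏ x ∈ ω, f x =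
      ∑ y ∈ A, f y * isobaricEsymm f B k (n - y) := by
  rw [← filter_filter, sum_filter, sum_powersetCard_union_filter_card_inter_eq_one hAB]
  refine sum_congr rfl fun y hy => ?_
  rw [isobaricEsymm, sum_filter, mul_sum]
  refine sum_congr rfl fun W hW => ?_
  have hyW : y ∉ W := fun h => disjoint_left.1 hAB hy ((mem_powersetCard.1 hW).1 h)
  have hsum : y + ∑ x ∈ W, x = n ↔ ∑ x ∈ W, x = n - y := by
    have := hA y hy
    lia
  simp only [sum_insert hyW, prod_insert hyW, hsum, mul_ite, mul_zero]

section Threshold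

/-- The bound `(c log n)^s` that separates the smallest element of a set in `Ω_n` from its other
elements. -/
noncomputable def threshold (s : ℕ) (c : ℝ) (n : ℕ) : ℝ :=
  (c * Real.log n) ^ s

variable {s : ℕ} {c : ℝ}

lemma tendsto_threshold_atTop (hs : s ≠ 0) (hc : 0 < c) :
    Tendsto (threshold s c) atTop atTop :=
  (tendsto_pow_atTop hs).comp
    ((Real.tendsto_log_atTop.comp tendsto_natCast_atTop_atTop).const_mul_atTop hc)

lemma threshold_nonneg (hc : 0 ≤ c) (n : ℕ) : 0 ≤ threshold s c n :=
  pow_nonneg (mul_nonneg hc (Real.log_natCast_nonneg n)) s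

lemma threshold_rpow (hs : s ≠ 0) (hc : 0 ≤ c) (n : ℕ) :
    threshold s c n ^ (1 / s : ℝ) = c * Real.log n := by
  rw [one_div]
  exact Real.pow_rpow_inv_natCast (mul_nonneg hc (Real.log_natCast_nonneg n)) hs

lemma threshold_isLittleO_rpow {r : ℝ} (hr : 0 < r) :
    threshold s c =o[atTop] fun n : ℕ => (n : ℝ) ^ r := by
  have hlog := (isLittleO_log_rpow_rpow_atTop (s : ℝ) hr).comp_tendsto
    (tendsto_natCast_atTop_atTop (R := ℝ))
  refine (hlog.const_mul_left (c ^ s)).congr_left fun n => ?_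
  rw [Function.comp_apply, Real.rpow_natCast, threshold, mul_pow]

lemma isEquivalent_sum_Ico_threshold (hs : s ≠ 0) (hc : 0 < c) :
    (fun n : ℕ => ∑ y ∈ Ico 1 ⌈threshold s c n⌉₊, (y : ℝ) ^ (-1 + 1 / s : ℝ)) ~[atTop]
      fun n => s * (c * Real.log n) := by
  have hT := tendsto_threshold_atTop hs hc
  have hceil : (fun n => (⌈threshold s c n⌉₊ : ℝ)) ~[atTop] threshold s c :=
    isEquivalent_nat_ceil.comp_tendsto hT
  have hinv : 1 / (s : ℝ) ≤ 1 :=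
    div_le_one_of_le₀ (by exact_mod_cast Nat.one_le_iff_ne_zero.2 hs) (by positivity)
  have hsum := (isEquivalent_sum_Ico_rpow (by positivity) hinv).comp_tendsto
    (tendsto_nat_ceil_atTop.comp hT)
  have hpow := (hceil.rpow (r := 1 / s) (threshold_nonneg hc.le)).mul
    (IsEquivalent.refl (u := fun _ => (s : ℝ)))
  refine hsum.trans (hpow.congr_left ?_ |>.congr_right ?_) <;> refine .of_forall fun n => ?_
  · simp
  · simp only [Pi.mul_apply, Pi.pow_apply, threshold_rpow hs hc.le, mul_comm]

lemma tendsto_isobaricEsymm_threshold (hs : 2 ≤ s) (hc : 0 < c) :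
    Tendsto (fun p : ℕ × ℕ => isobaricEsymm (fun x => (x : ℝ) ^ (-1 + 1 / s : ℝ))
        (Ioc ⌊threshold s c p.1⌋₊ p.1) s (p.1 - p.2))
      (fiberFilter atTop fun n => Ico 1 ⌈threshold s c n⌉₊)
      (𝓝 (Real.Gamma (1 / s) ^ s / s !)) := by
  have ht : Tendsto (fun n => ⌊threshold s c n⌋₊) atTop atTop :=
    tendsto_nat_floor_atTop.comp (tendsto_threshold_atTop (by lia) hc)
  refine tendsto_isobaricEsymm_rpow hs (ht.comp tendsto_fst_fiberFilter) ?_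
    (.of_forall fun p => Nat.sub_le _ _)
  have hfloor : (fun n => (⌊threshold s c n⌋₊ : ℝ)) =o[atTop]
      fun n : ℕ => (n : ℝ) ^ (1 / s : ℝ) := by
    refine IsBigO.trans_isLittleO (.of_norm_le fun n => ?_)
      (threshold_isLittleO_rpow (c := c) (s := s) (by positivity))
    rw [Real.norm_natCast]
    exact Nat.floor_le (threshold_nonneg hc.le n)
  refine (hfloor.comp_tendsto tendsto_fst_fiberFilter).trans_isBigO (.of_bound (2 ^ (1 / s : ℝ)) ?_)
  have hT : ∀ᶠ n : ℕ in atTop, threshold s c n ≤ n / 2 := by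
    filter_upwards [(threshold_isLittleO_rpow (s := s) (c := c) one_pos).bound one_half_pos]
      with n hn
    rw [Real.norm_of_nonneg (threshold_nonneg hc.le n), Real.rpow_one, Real.norm_natCast] at hn
    linarith
  rw [eventually_fiberFilter]
  filter_upwards [hT] with n hn y hy
  have hyT : (y : ℝ) < threshold s c n := Nat.lt_ceil.1 (mem_Ico.1 hy).2
  have hyn : y ≤ n := by exact_mod_cast (by linarith [(n.cast_nonneg : (0 : ℝ) ≤ n)] : (y : ℝ) ≤ n)
  rw [Function.comp_apply, Real.norm_of_nonneg (by positivity), Real.norm_of_nonneg (by positivity),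
    ← Real.mul_rpow zero_le_two (Nat.cast_nonneg _)]
  gcongr
  rw [Nat.cast_sub hyn]
  linarith

lemma eventually_threshold_le (hc : 0 ≤ c) : ∀ᶠ n : ℕ in atTop, threshold s c n ≤ n := by
  filter_upwards [(threshold_isLittleO_rpow (s := s) (c := c) one_pos).bound one_pos] with n hn
  rwa [Real.norm_of_nonneg (threshold_nonneg hc n), Real.rpow_one, Real.norm_natCast,
    one_mul] at hn

end Threshold

section OmegaN

variable {s : ℕ} {c : ℝ} {n : ℕ}

lemma disjoint_Ico_ceil_Ioc_floor (T : ℝ) (m n : ℕ) : Disjoint (Ico m ⌈T⌉₊) (Ioc ⌊T⌋₊ n) := by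
  refine disjoint_left.2 fun x hx hx' => ?_
  have := Nat.ceil_le_floor_add_one T
  rw [mem_Ico] at hx
  rw [mem_Ioc] at hx'
  lia

lemma mem_Ico_ceil_union_Ioc_floor_iff {T : ℝ} (hT : 0 ≤ T) (hTn : T ≤ n) {x : ℕ} :
    x ∈ Ico 1 ⌈T⌉₊ ∪ Ioc ⌊T⌋₊ n ↔ x ∈ Icc 1 n ∧ (x : ℝ) ≠ T := by
  rw [mem_union, mem_Ico, mem_Ioc, mem_Icc, Nat.lt_ceil, Nat.floor_lt hT]
  constructor
  · rintro (⟨hx, hxT⟩ | ⟨hTx, hx⟩)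
    · exact ⟨⟨hx, Nat.cast_le.1 (hxT.le.trans hTn)⟩, hxT.ne⟩
    · exact ⟨⟨Nat.cast_pos.1 (hT.trans_lt hTx), hx⟩, hTx.ne'⟩
  · rintro ⟨⟨hx, hxn⟩, hxT⟩
    exact hxT.lt_or_gt.imp (fun h => ⟨hx, h⟩) fun h => ⟨h, hxn⟩

lemma OmegaN_eq_filter_card_inter_eq_one (hc : 0 ≤ c) (hn : threshold s c n ≤ n) :
    OmegaN s c n = {ω ∈ powersetCard (s + 1)
      (Ico 1 ⌈threshold s c n⌉₊ ∪ Ioc ⌊threshold s c n⌋₊ n) |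
        #(ω ∩ Ico 1 ⌈threshold s c n⌉₊) = 1 ∧ ∑ x ∈ ω, x = n} := by
  ext ω
  have hsub : ω ⊆ Ico 1 ⌈threshold s c n⌉₊ ∪ Ioc ⌊threshold s c n⌋₊ n ↔
      ω ⊆ Icc 1 n ∧ ∀ x ∈ ω, (x : ℝ) ≠ threshold s c n := by
    simp only [subset_iff, mem_Ico_ceil_union_Ioc_floor_iff (threshold_nonneg hc n) hn,
      forall_and]
  have hinter (hω : ω ⊆ Icc 1 n) :
      ω ∩ Ico 1 ⌈threshold s c n⌉₊ = ω.filter fun x : ℕ => (x : ℝ) < threshold s c n := by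
    ext x
    rw [mem_inter, mem_filter, mem_Ico, Nat.lt_ceil]
    exact and_congr_right fun hx => and_iff_right (mem_Icc.1 (hω hx)).1
  simp only [OmegaN, mem_filter, mem_powersetCard, hsub, id_def, ← threshold.eq_1]
  constructor
  · rintro ⟨⟨hω, hcard⟩, hsum, hone, hne⟩
    exact ⟨⟨⟨hω, hne⟩, hcard⟩, by rwa [hinter hω], hsum⟩
  · rintro ⟨⟨⟨hω, hne⟩, hcard⟩, hone, hsum⟩
    exact ⟨⟨hω, hcard⟩, hsum, by rwa [← hinter hω], hne⟩

lemma sum_OmegaN_prod_eq (f : ℕ → ℝ) (hc : 0 ≤ c) (hn : threshold s c n ≤ n) :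
    ∑ ω ∈ OmegaN s c n, ∏ x ∈ ω, f x = ∑ y ∈ Ico 1 ⌈threshold s c n⌉₊,
      f y * isobaricEsymm f (Ioc ⌊threshold s c n⌋₊ n) s (n - y) := by
  rw [OmegaN_eq_filter_card_inter_eq_one hc hn]
  refine sum_prod_filter_card_inter_eq_one f (disjoint_Ico_ceil_Ioc_floor _ _ _) s fun y hy => ?_
  exact Nat.cast_le.1 ((Nat.lt_ceil.1 (mem_Ico.1 hy).2).le.trans hn)

lemma isEquivalent_sum_OmegaN (hs : 2 ≤ s) (hc : 0 < c) :
    (fun n => ∑ ω ∈ OmegaN s c n, ∏ x ∈ ω, (x : ℝ) ^ (-1 + 1 / s : ℝ)) ~[atTop]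
      fun n => Real.Gamma (1 / s) ^ s / s ! * (s * (c * Real.log n)) := by
  set f : ℕ → ℝ := fun x => (x : ℝ) ^ (-1 + 1 / s : ℝ)
  have hK : 0 < Real.Gamma (1 / s) ^ s / s ! := by
    have := Real.Gamma_pos_of_pos (by positivity : (0 : ℝ) < 1 / s)
    positivity
  set K := Real.Gamma (1 / s) ^ s / (s !)
  have hinner : (fun p : ℕ × ℕ => f p.2 *
        isobaricEsymm f (Ioc ⌊threshold s c p.1⌋₊ p.1) s (p.1 - p.2))
      ~[fiberFilter atTop fun n => Ico 1 ⌈threshold s c n⌉₊] fun p => f p.2 * K :=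
    IsEquivalent.refl.mul ((isEquivalent_const_iff_tendsto hK.ne').2
      (tendsto_isobaricEsymm_threshold hs hc))
  have hsum := isEquivalent_sum
    (u := fun n y => f y * isobaricEsymm f (Ioc ⌊threshold s c n⌋₊ n) s (n - y))
    (v := fun _ y => f y * K) (fun n y _ => mul_nonneg (by positivity) hK.le) hinner
  have hsmall := (IsEquivalent.refl (u := fun _ => K)).mul
    (isEquivalent_sum_Ico_threshold (s := s) (by lia) hc)
  refine (hsum.congr_left ?_).trans (hsmall.congr_left (.of_forall fun n => ?_))
  · filter_upwards [eventually_threshold_le hc.le] with n hn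
    exact (sum_OmegaN_prod_eq f hc.le hn).symm
  · rw [Pi.mul_apply, mul_comm, sum_mul]

lemma prod_rpow_le_of_mem_OmegaN {r : ℝ} (hr : r ≤ 0) {ω : Finset ℕ} (hω : ω ∈ OmegaN s c n) :
    ∏ x ∈ ω, (x : ℝ) ^ r ≤ (n / (s + 1 : ℕ) : ℝ) ^ r := by
  obtain ⟨hmem, hsum, -⟩ := mem_filter.1 hω
  obtain ⟨hsub, hcard⟩ := mem_powersetCard.1 hmem
  have hle := prod_rpow_le_div_card_rpow (fun x hx => (mem_Icc.1 (hsub hx)).1)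
    (card_pos.1 (by lia)) hr
  rwa [show ∑ x ∈ ω, x = n from hsum, hcard] at hle

lemma tendsto_prod_OmegaN {r : ℝ} (hr : r < 0) :
    Tendsto (fun q : ℕ × Finset ℕ => ∏ x ∈ q.2, (x : ℝ) ^ r)
      (fiberFilter atTop (OmegaN s c)) (𝓝 0) := by
  have hbound : Tendsto (fun n : ℕ => (n / (s + 1 : ℕ) : ℝ) ^ r) atTop (𝓝 0) := by
    have h := tendsto_rpow_neg_atTop (neg_pos.2 hr)
    rw [neg_neg] at h
    exact h.comp (tendsto_natCast_atTop_atTop.atTop_div_const (by positivity))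
  refine tendsto_of_tendsto_of_tendsto_of_le_of_le' tendsto_const_nhds
    (hbound.comp tendsto_fst_fiberFilter) (.of_forall fun q => ?_) ?_
  · exact prod_nonneg fun x _ => by positivity
  · exact eventually_fiberFilter.2 (.of_forall fun n ω hω => prod_rpow_le_of_mem_OmegaN hr.le hω)

lemma isEquivalent_neg_log_prod_OmegaN (hs : 2 ≤ s) (hc : 0 < c) {a : ℝ} (ha : 0 ≤ a) :
    (fun n : ℕ => -Real.log (∏ ω ∈ OmegaN s c n,
      (1 - a * ∏ x ∈ ω, (x : ℝ) ^ (-1 + 1 / s : ℝ)))) ~[atTop]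
      fun n => a * (Real.Gamma (1 / s) ^ s / s ! * (s * (c * Real.log n))) := by
  have hexp : (-1 + 1 / s : ℝ) < 0 := by
    have : 1 / (s : ℝ) < 1 := (div_lt_one (by positivity)).2 (by exact_mod_cast hs)
    linarith
  have hlim : Tendsto (fun q : ℕ × Finset ℕ => a * ∏ x ∈ q.2, (x : ℝ) ^ (-1 + 1 / s : ℝ))
      (fiberFilter atTop (OmegaN s c)) (𝓝 0) := by
    simpa using (tendsto_prod_OmegaN hexp).const_mul a
  have hlog := isEquivalent_neg_log_prod_one_sub
    (p := fun _ (ω : Finset ℕ) => a * ∏ x ∈ ω, (x : ℝ) ^ (-1 + 1 / s : ℝ))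
    (fun n ω _ => mul_nonneg ha (prod_nonneg fun x _ => by positivity)) hlim
  have hsum := (IsEquivalent.refl (u := fun _ => a)).mul (isEquivalent_sum_OmegaN hs hc)
  exact hlog.trans (hsum.congr_left (.of_forall fun n => mul_sum _ _ _))

end OmegaN

/-- Lemma 4 (Lemma `prod`): with `p(ω) = s^{-(s+1)} ∏_{x ∈ ω} x^{-1+1/s}`, one has
`∏_{ω ∈ Ω_n} (1 - p(ω)) = exp(-(1+o(1)) c λ_s log n)`, i.e.
`-log ∏_{ω ∈ Ω_n} (1 - p(ω)) ∼ c λ_s log n` as `n → ∞`. -/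
theorem stmt_9 (s : ℕ) (hs : 2 ≤ s) (c : ℝ) (hc : 0 < c) :
    Filter.Tendsto
      (fun n : ℕ =>
        (-Real.log (∏ ω ∈ OmegaN s c n,
          (1 - ((s : ℝ) ^ (s + 1))⁻¹ * ∏ x ∈ ω, (x : ℝ) ^ (-1 + 1 / (s : ℝ))))) /
          Real.log n)
      Filter.atTop (nhds (c * lambdaS s)) := by
  have hlog : (fun n : ℕ => -Real.log (∏ ω ∈ OmegaN s c n,
      (1 - ((s : ℝ) ^ (s + 1))⁻¹ * ∏ x ∈ ω, (x : ℝ) ^ (-1 + 1 / (s : ℝ)))))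
      ~[atTop] fun n => c * lambdaS s * Real.log n := by
    refine (isEquivalent_neg_log_prod_OmegaN hs hc (by positivity)).congr_right
      (.of_forall fun n => ?_)
    rw [lambdaS, pow_succ]
    field_simp
  refine (hlog.div IsEquivalent.refl).symm.tendsto_nhds (tendsto_const_nhds.congr' ?_)
  filter_upwards [eventually_gt_atTop 1] with n hn
  exact (mul_div_cancel_right₀ _ (Real.log_pos (by exact_mod_cast hn)).ne').symm
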